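/- Assume in addition that K₊, K₋ > 0 are constants, a₊, a₋ : ℝ^d → ℝ are continuous with a₊(y) < α < a₋(y) for every y ∈ ℝ^d, that −K₊ ≤ U(x,y) ≤ K₋ for all (x,y), that U(x,y) = −K₊ whenever x ≤ a₊(y) and U(x,y) = K₋ whenever x ≥ a₋(y), that (L̂ U)(x,y) + b_x(x,y)U(x,y) + c_x(x,y) = 0 whenever a₊(y) < x < a₋(y), that c_x(x,y) + K₋·b_x(x,y) ≥ 0 whenever x ≥ a₋(y), and that c_x(x,y) − K₊·b_x(x,y) ≤ 0 whenever x ≤ a₊(y). Then for every (x,y) ∈ ℝ × ℝ^d: −K₊ ≤ V_x(x,y) ≤ K₋, (L V)(x,y) + c(x,y) − λ(y) ≥ 0, and min{ (L V)(x,y) + c(x,y) − λ(y), K₋ − V_x(x,y), V_x(x,y) + K₊ } = 0. -/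

import Mathlib

open MeasureTheory

/-- Partial derivative in the first (scalar) variable. -/
noncomputable def pdx {d : ℕ} (f : ℝ × (Fin d → ℝ) → ℝ) (p : ℝ × (Fin d → ℝ)) : ℝ :=
  deriv (fun x => f (x, p.2)) p.1

/-- Partial derivative in the `i`-th coordinate of the second variable. -/
noncomputable def pdy {d : ℕ} (i : Fin d) (f : ℝ × (Fin d → ℝ) → ℝ) (p : ℝ × (Fin d → ℝ)) : ℝ :=
  deriv (fun t => f (p.1, Function.update p.2 i t)) (p.2 i)

/-- `(ρζ)_i(y) = ∑_j ρ_j ζ_{ij}(y)`. -/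
noncomputable def rzeta {d : ℕ} (ζ : (Fin d → ℝ) → Fin d → Fin d → ℝ) (ρ : Fin d → ℝ)
    (y : Fin d → ℝ) (i : Fin d) : ℝ := ∑ j, ρ j * ζ y i j

/-- `a(y) = ζ(y) ζ(y)ᵀ`. -/
noncomputable def amat {d : ℕ} (ζ : (Fin d → ℝ) → Fin d → Fin d → ℝ)
    (y : Fin d → ℝ) (i j : Fin d) : ℝ := ∑ k, ζ y i k * ζ y j k

/-- The generator `L̂` of the auxiliary process `(X̂, Ŷ)`, applied to `U`. -/
noncomputable def genHat {d : ℕ} (b σ' : ℝ × (Fin d → ℝ) → ℝ)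
    (η : (Fin d → ℝ) → Fin d → ℝ) (ζ : (Fin d → ℝ) → Fin d → Fin d → ℝ) (ρ : Fin d → ℝ)
    (U : ℝ × (Fin d → ℝ) → ℝ) (p : ℝ × (Fin d → ℝ)) : ℝ :=
  (b p + σ' p * pdx σ' p) * pdx U p
    + (1 / 2) * (σ' p) ^ 2 * pdx (pdx U) p
    + ∑ i, (η p.2 i + pdx σ' p * rzeta ζ ρ p.2 i) * pdy i U p
    + (1 / 2) * ∑ i, ∑ j, amat ζ p.2 i j * pdy i (pdy j U) p
    + σ' p * ∑ i, rzeta ζ ρ p.2 i * pdy i (pdx U) p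

/-- The generator `L` of the uncontrolled process `(X⁰, Y)`, applied to `V`. -/
noncomputable def gen {d : ℕ} (b σ' : ℝ × (Fin d → ℝ) → ℝ)
    (η : (Fin d → ℝ) → Fin d → ℝ) (ζ : (Fin d → ℝ) → Fin d → Fin d → ℝ) (ρ : Fin d → ℝ)
    (V : ℝ × (Fin d → ℝ) → ℝ) (p : ℝ × (Fin d → ℝ)) : ℝ :=
  b p * pdx V p
    + (1 / 2) * (σ' p) ^ 2 * pdx (pdx V) p
    + ∑ i, η p.2 i * pdy i V p
    + (1 / 2) * ∑ i, ∑ j, amat ζ p.2 i j * pdy i (pdy j V) p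
    + σ' p * ∑ i, rzeta ζ ρ p.2 i * pdy i (pdx V) p


lemma pdy_hasDerivAt {d : ℕ} {f : ℝ × (Fin d → ℝ) → ℝ} (hf : Differentiable ℝ f)
    (i : Fin d) (x : ℝ) (y : Fin d → ℝ) (t : ℝ) :
    HasDerivAt (fun t => f (x, Function.update y i t))
      (fderiv ℝ f (x, Function.update y i t) (0, Pi.single i 1)) t :=
  (hf (x, Function.update y i t)).hasFDerivAt.comp_hasDerivAt t
    ((hasDerivAt_const t x).prodMk (hasDerivAt_update y i t))

lemma pdy_eq {d : ℕ} {f : ℝ × (Fin d → ℝ) → ℝ} (hf : Differentiable ℝ f) (i : Fin d) :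
    pdy i f = fun p => fderiv ℝ f p (0, Pi.single i 1) := by
  funext p
  have h := (pdy_hasDerivAt hf i p.1 p.2 (p.2 i)).deriv
  rw [Function.update_eq_self] at h
  exact h

lemma pdx_hasDerivAt' {d : ℕ} {f : ℝ × (Fin d → ℝ) → ℝ} (hf : Differentiable ℝ f)
    (x : ℝ) (y : Fin d → ℝ) :
    HasDerivAt (fun t => f (t, y)) (fderiv ℝ f (x, y) (1, 0)) x :=
  (hf (x, y)).hasFDerivAt.comp_hasDerivAt x
    ((hasDerivAt_id x).prodMk (hasDerivAt_const x y))

lemma pdx_eq {d : ℕ} {f : ℝ × (Fin d → ℝ) → ℝ} (hf : Differentiable ℝ f) :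
    pdx f = fun p => fderiv ℝ f p (1, 0) := by
  funext p
  exact (pdx_hasDerivAt' hf p.1 p.2).deriv

lemma pdx_hasDerivAt {d : ℕ} {f : ℝ × (Fin d → ℝ) → ℝ} (hf : Differentiable ℝ f)
    (x : ℝ) (y : Fin d → ℝ) :
    HasDerivAt (fun t => f (t, y)) (pdx f (x, y)) x := by
  rw [pdx_eq hf]; exact pdx_hasDerivAt' hf x y

lemma pdy_contDiff {d : ℕ} {f : ℝ × (Fin d → ℝ) → ℝ} (hf : ContDiff ℝ 2 f) (i : Fin d) :
    ContDiff ℝ 1 (pdy i f) := by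
  rw [pdy_eq (hf.differentiable (by norm_num))]
  exact (hf.fderiv_right (m := 1) (by norm_num)).clm_apply contDiff_const

lemma pdx_contDiff {d : ℕ} {f : ℝ × (Fin d → ℝ) → ℝ} (hf : ContDiff ℝ 2 f) :
    ContDiff ℝ 1 (pdx f) := by
  rw [pdx_eq (hf.differentiable (by norm_num))]
  exact (hf.fderiv_right (m := 1) (by norm_num)).clm_apply contDiff_const

lemma pdy_cont {d : ℕ} {f : ℝ × (Fin d → ℝ) → ℝ} (hf : ContDiff ℝ 1 f) (i : Fin d) :
    Continuous (pdy i f) := by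
  rw [pdy_eq (hf.differentiable (by norm_num))]
  exact (hf.continuous_fderiv (by norm_num)).clm_apply continuous_const

lemma pd_symm {d : ℕ} {f : ℝ × (Fin d → ℝ) → ℝ} (hf : ContDiff ℝ 2 f) (i : Fin d)
    (p : ℝ × (Fin d → ℝ)) : pdx (pdy i f) p = pdy i (pdx f) p := by
  have h1 := (pdy_contDiff hf i).differentiable (by norm_num)
  have h2 := (pdx_contDiff hf).differentiable (by norm_num)
  rw [pdx_eq h1, pdy_eq h2]
  have hd := hf.differentiable (by norm_num)
  rw [pdx_eq hd, pdy_eq hd]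
  have hs : IsSymmSndFDerivAt ℝ f p := hf.contDiffAt.isSymmSndFDerivAt (by simp)
  have hfd : DifferentiableAt ℝ (fderiv ℝ f) p :=
    ((hf.fderiv_right (m := 1) (by norm_num)).differentiable (by norm_num)) p
  have e : ∀ v w : ℝ × (Fin d → ℝ),
      fderiv ℝ (fun q => fderiv ℝ f q v) p w = fderiv ℝ (fderiv ℝ f) p w v := by
    intro v w
    rw [fderiv_clm_apply hfd (by fun_prop)]
    simp
  simp only [e]
  exact hs _ _

lemma int_hasDerivAt {d : ℕ} {f : ℝ × (Fin d → ℝ) → ℝ} (hf : Continuous f) (α x : ℝ)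
    (y : Fin d → ℝ) : HasDerivAt (fun x => ∫ z in α..x, f (z, y)) (f (x, y)) x := by
  have hc : Continuous (fun z => f (z, y)) := by fun_prop
  exact (hc.integral_hasStrictDerivAt α x).hasDerivAt

lemma pdy_int {d : ℕ} {f : ℝ × (Fin d → ℝ) → ℝ} (hf : ContDiff ℝ 1 f) (α : ℝ) (i : Fin d) :
    pdy i (fun p => ∫ z in α..p.1, f (z, p.2)) = fun p => ∫ z in α..p.1, pdy i f (z, p.2) := by
  funext ⟨x, y⟩
  have hd := hf.differentiable (by norm_num)
  have hfc := hf.continuous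
  have hpc := pdy_cont hf i
  have hu : Continuous (fun t : ℝ => Function.update y i t) := continuous_const.update i continuous_id
  have hcont : Continuous (fun q : ℝ × ℝ => pdy i f (q.2, Function.update y i q.1)) :=
    hpc.comp (continuous_snd.prodMk (hu.comp continuous_fst))
  obtain ⟨C, hC⟩ := ((isCompact_closedBall (y i) 1).prod
    (isCompact_uIcc (a := α) (b := x))).exists_bound_of_continuousOn hcont.continuousOn
  have key := intervalIntegral.hasDerivAt_integral_of_dominated_loc_of_deriv_le
    (μ := volume) (a := α) (b := x) (𝕜 := ℝ)
    (F := fun t z => f (z, Function.update y i t))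
    (F' := fun t z => pdy i f (z, Function.update y i t)) (x₀ := y i)
    (s := Metric.ball (y i) 1) (bound := fun _ => C) (Metric.ball_mem_nhds _ one_pos)
    (Filter.Eventually.of_forall fun t => by
      apply Continuous.aestronglyMeasurable; fun_prop)
    (by apply Continuous.intervalIntegrable; fun_prop)
    (by apply Continuous.aestronglyMeasurable; fun_prop)
    (Filter.Eventually.of_forall fun z hz t ht =>
      hC (t, z) ⟨Metric.ball_subset_closedBall ht, Set.uIoc_subset_uIcc hz⟩)
    (by simp)
    (Filter.Eventually.of_forall fun z hz t ht => by
      rw [pdy_eq hd]; exact pdy_hasDerivAt hd i z y t)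
  have := key.2.deriv
  simp only [Function.update_eq_self] at this
  exact this

lemma pdx_int {d : ℕ} {f : ℝ × (Fin d → ℝ) → ℝ} (hf : Continuous f) (α : ℝ) :
    pdx (fun p => ∫ z in α..p.1, f (z, p.2)) = f := by
  funext ⟨x, y⟩
  exact (int_hasDerivAt hf α x y).deriv

/-- On an open set where `U` is constant, the generator vanishes. -/
lemma genHat_zero {d : ℕ} (b σ : ℝ × (Fin d → ℝ) → ℝ)
    (η : (Fin d → ℝ) → Fin d → ℝ) (ζ : (Fin d → ℝ) → Fin d → Fin d → ℝ) (ρ : Fin d → ℝ)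
    {U : ℝ × (Fin d → ℝ) → ℝ} (hU : ContDiff ℝ 2 U) (p : ℝ × (Fin d → ℝ)) (K : ℝ)
    (h : U =ᶠ[nhds p] fun _ => K) : genHat b σ η ζ ρ U p = 0 := by
  have key : ∀ {g : ℝ × (Fin d → ℝ) → ℝ} (_ : ContDiff ℝ 1 g) (k : ℝ),
      g =ᶠ[nhds p] (fun _ => k) → pdx g =ᶠ[nhds p] (fun _ => 0) ∧
        ∀ i, pdy i g =ᶠ[nhds p] (fun _ => 0) := by
    intro g hg k h
    have hd := hg.differentiable (by norm_num)
    have h' := h.fderiv (𝕜 := ℝ)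
    refine ⟨?_, fun i => ?_⟩
    · rw [pdx_eq hd]
      filter_upwards [h'] with q hq
      rw [hq]; simp
    · rw [pdy_eq hd]
      filter_upwards [h'] with q hq
      rw [hq]; simp
  obtain ⟨hx, hy⟩ := key (hU.of_le (by norm_num)) K h
  obtain ⟨hxx, hxy⟩ := key (pdx_contDiff hU) 0 hx
  have hyy := fun i j => (key (pdy_contDiff hU j) 0 (hy j)).2 i
  unfold genHat
  simp [hx.eq_of_nhds, hxx.eq_of_nhds, (hxy _).eq_of_nhds, (hy _).eq_of_nhds,
    (hyy _ _).eq_of_nhds]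

theorem statement1 {d : ℕ} (hd : 1 ≤ d) (α : ℝ)
    (b σ c : ℝ × (Fin d → ℝ) → ℝ)
    (hb : ContDiff ℝ 1 b) (hσ : ContDiff ℝ 1 σ) (hc : ContDiff ℝ 1 c)
    (η : (Fin d → ℝ) → Fin d → ℝ) (ζ : (Fin d → ℝ) → Fin d → Fin d → ℝ) (ρ : Fin d → ℝ)
    (U : ℝ × (Fin d → ℝ) → ℝ) (hU : ContDiff ℝ 2 U)
    (V : ℝ × (Fin d → ℝ) → ℝ)
    (hV : ∀ (x : ℝ) (y : Fin d → ℝ), V (x, y) = ∫ z in α..x, U (z, y))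
    (lam : (Fin d → ℝ) → ℝ)
    (hlam : ∀ y : Fin d → ℝ, lam y = c (α, y) + U (α, y) * b (α, y)
        + (1 / 2) * (σ (α, y)) ^ 2 * pdx U (α, y)
        + σ (α, y) * ∑ i, rzeta ζ ρ y i * pdy i U (α, y))
    (Kp Km : ℝ) (hKp : 0 < Kp) (hKm : 0 < Km)
    (ap am : (Fin d → ℝ) → ℝ) (hap : Continuous ap) (ham : Continuous am)
    (horder : ∀ y : Fin d → ℝ, ap y < α ∧ α < am y)
    (hUbdd : ∀ (x : ℝ) (y : Fin d → ℝ), -Kp ≤ U (x, y) ∧ U (x, y) ≤ Km)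
    (hUplus : ∀ (x : ℝ) (y : Fin d → ℝ), x ≤ ap y → U (x, y) = -Kp)
    (hUminus : ∀ (x : ℝ) (y : Fin d → ℝ), am y ≤ x → U (x, y) = Km)
    (hPDE : ∀ (x : ℝ) (y : Fin d → ℝ), ap y < x → x < am y →
      genHat b σ η ζ ρ U (x, y) + pdx b (x, y) * U (x, y) + pdx c (x, y) = 0)
    (hSminus : ∀ (x : ℝ) (y : Fin d → ℝ), am y ≤ x →
      0 ≤ pdx c (x, y) + Km * pdx b (x, y))
    (hSplus : ∀ (x : ℝ) (y : Fin d → ℝ), x ≤ ap y →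
      pdx c (x, y) - Kp * pdx b (x, y) ≤ 0) :
    ∀ (x : ℝ) (y : Fin d → ℝ),
      (-Kp ≤ pdx V (x, y) ∧ pdx V (x, y) ≤ Km)
      ∧ 0 ≤ gen b σ η ζ ρ V (x, y) + c (x, y) - lam y
      ∧ min (min (gen b σ η ζ ρ V (x, y) + c (x, y) - lam y)
          (Km - pdx V (x, y))) (pdx V (x, y) + Kp) = 0 := by
  have hU1 : ContDiff ℝ 1 U := hU.of_le (by norm_num)
  have hVe : V = fun p => ∫ z in α..p.1, U (z, p.2) := funext fun p => hV p.1 p.2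
  have hVx : pdx V = U := by rw [hVe]; exact pdx_int hU.continuous α
  have hVy : ∀ j, pdy j V = fun p => ∫ z in α..p.1, pdy j U (z, p.2) := fun j => by
    rw [hVe]; exact pdy_int hU1 α j
  have hVyy : ∀ i j, pdy i (pdy j V) = fun p => ∫ z in α..p.1, pdy i (pdy j U) (z, p.2) :=
    fun i j => by rw [hVy]; exact pdy_int (pdy_contDiff hU j) α i
  intro x y
  rw [hVx]
  set G : ℝ → ℝ := fun x => gen b σ η ζ ρ V (x, y) + c (x, y) - lam y with hG
  have hGα : G α = 0 := by
    simp only [hG, gen, hVx, hVyy]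
    simp only [hVy, hlam, intervalIntegral.integral_same]
    simp
    ring
  have hGd : ∀ x, HasDerivAt G
      (genHat b σ η ζ ρ U (x, y) + pdx b (x, y) * U (x, y) + pdx c (x, y)) x := by
    intro x
    have hb' := pdx_hasDerivAt (hb.differentiable (by norm_num)) x y
    have hσ' := pdx_hasDerivAt (hσ.differentiable (by norm_num)) x y
    have hc' := pdx_hasDerivAt (hc.differentiable (by norm_num)) x y
    have hU' := pdx_hasDerivAt (hU1.differentiable (by norm_num)) x y
    have hUx' := pdx_hasDerivAt ((pdx_contDiff hU).differentiable (by norm_num)) x y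
    have hUy' := fun i => pdx_hasDerivAt ((pdy_contDiff hU i).differentiable (by norm_num)) x y
    have hI := fun i => int_hasDerivAt (pdy_contDiff hU i).continuous α x y
    have hII := fun i j => int_hasDerivAt (pdy_cont (pdy_contDiff hU j) i) α x y
    have h3 := HasDerivAt.fun_sum (u := Finset.univ) fun i _ => (hI i).const_mul (η y i)
    have h4 := HasDerivAt.fun_sum (u := Finset.univ) fun i _ =>
      HasDerivAt.fun_sum (u := Finset.univ) fun j _ => (hII i j).const_mul (amat ζ y i j)
    have h5 := HasDerivAt.fun_sum (u := Finset.univ) fun i _ =>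
      (hUy' i).const_mul (rzeta ζ ρ y i)
    have h := ((((((hb'.mul hU').add (((hσ'.pow 2).const_mul (1/2)).mul hUx')).add h3).add
      (h4.const_mul (1/2))).add (hσ'.mul h5)).add hc').sub_const (lam y)
    refine (h.congr_deriv ?_).congr_of_eventuallyEq (Filter.Eventually.of_forall fun t => ?_)
    · simp only [Pi.pow_apply, genHat, pd_symm hU, add_mul, Finset.sum_add_distrib, mul_assoc, ← Finset.mul_sum]
      push_cast
      ring
    · simp only [hG, gen, hVx, hVyy]
      simp only [hVy]
      rfl
  obtain ⟨h1, h2⟩ := horder y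
  have hGc : Continuous G := continuous_iff_continuousAt.2 fun x => (hGd x).continuousAt
  have hGD : Differentiable ℝ G := fun x => (hGd x).differentiableAt
  have hmid : ∀ t ∈ Set.Icc (ap y) (am y), G t = 0 := by
    have hm : MonotoneOn G (Set.Icc (ap y) (am y)) := by
      refine monotoneOn_of_deriv_nonneg (convex_Icc _ _) hGc.continuousOn hGD.differentiableOn ?_
      intro t ht
      rw [interior_Icc] at ht
      rw [(hGd t).deriv, hPDE t y ht.1 ht.2]
    have ha : AntitoneOn G (Set.Icc (ap y) (am y)) := by
      refine antitoneOn_of_deriv_nonpos (convex_Icc _ _) hGc.continuousOn hGD.differentiableOn ?_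
      intro t ht
      rw [interior_Icc] at ht
      rw [(hGd t).deriv, hPDE t y ht.1 ht.2]
    intro t ht
    have hα : α ∈ Set.Icc (ap y) (am y) := ⟨h1.le, h2.le⟩
    rw [← hGα]
    rcases le_total t α with hle | hle
    · exact le_antisymm (hm ht hα hle) (ha ht hα hle)
    · exact le_antisymm (ha hα ht hle) (hm hα ht hle)
  have hright : ∀ t, am y ≤ t → 0 ≤ G t := by
    have hm : MonotoneOn G (Set.Ici (am y)) := by
      refine monotoneOn_of_deriv_nonneg (convex_Ici _) hGc.continuousOn hGD.differentiableOn ?_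
      intro t ht
      rw [interior_Ici] at ht
      have ht' : am y < t := ht
      have hopen : IsOpen {p : ℝ × (Fin d → ℝ) | am p.2 < p.1} :=
        isOpen_lt (by fun_prop) (by fun_prop)
      have hz := genHat_zero b σ η ζ ρ hU (t, y) Km (by
        filter_upwards [hopen.mem_nhds (show (t, y) ∈ _ from ht')] with q hq
        exact hUminus q.1 q.2 (le_of_lt hq))
      rw [(hGd t).deriv, hz, hUminus t y ht'.le]
      linarith [hSminus t y ht'.le]
    intro t ht
    rw [← hmid (am y) ⟨(h1.trans h2).le, le_rfl⟩]
    exact hm Set.self_mem_Ici ht ht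
  have hleft : ∀ t, t ≤ ap y → 0 ≤ G t := by
    have hm : AntitoneOn G (Set.Iic (ap y)) := by
      refine antitoneOn_of_deriv_nonpos (convex_Iic _) hGc.continuousOn hGD.differentiableOn ?_
      intro t ht
      rw [interior_Iic] at ht
      have ht' : t < ap y := ht
      have hopen : IsOpen {p : ℝ × (Fin d → ℝ) | p.1 < ap p.2} :=
        isOpen_lt (by fun_prop) (by fun_prop)
      have hz := genHat_zero b σ η ζ ρ hU (t, y) (-Kp) (by
        filter_upwards [hopen.mem_nhds (show (t, y) ∈ _ from ht')] with q hq
        exact hUplus q.1 q.2 (le_of_lt hq))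
      rw [(hGd t).deriv, hz, hUplus t y ht'.le]
      linarith [hSplus t y ht'.le]
    intro t ht
    rw [← hmid (ap y) ⟨le_rfl, (h1.trans h2).le⟩]
    exact hm ht Set.self_mem_Iic ht
  change _ ∧ 0 ≤ G x ∧ min (min (G x) _) _ = 0
  obtain ⟨hl, hr⟩ := hUbdd x y
  refine ⟨⟨hl, hr⟩, ?_⟩
  rcases le_total x (ap y) with hx | hx
  · refine ⟨hleft x hx, ?_⟩
    have := hleft x hx
    rw [hUplus x y hx, min_eq_right] <;> [ring; skip]
    exact le_min (by linarith) (by linarith)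
  rcases le_total x (am y) with hx' | hx'
  · have h0 := hmid x ⟨hx, hx'⟩
    refine ⟨h0.ge, ?_⟩
    rw [h0, min_eq_left (by linarith : (0:ℝ) ≤ Km - U (x, y)), min_eq_left (by linarith)]
  · have := hright x hx'
    refine ⟨this, ?_⟩
    rw [hUminus x y hx', sub_self, min_eq_right this, min_eq_left (by linarith)]
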